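/- Let G be a connected simple graph with n > 3 vertices, m edges, and maximum degree Δ(G). If Δ(G) ≤ (n + 1)/2, then mc(G) = m − n + 2. -/

import Mathlib

open SimpleGraph Filter Real

/-- An edge-coloring `c` (colors on vertex pairs, only the values on edges matter)
of `G` is a monochromatic connection coloring (MC-coloring) if every two vertices
are joined by a path all of whose edges receive the same color. -/
def IsMCColoring {V : Type*} (G : SimpleGraph V) (c : Sym2 V → ℕ) : Prop :=
  ∀ u v : V, ∃ p : G.Walk u v, p.IsPath ∧ ∃ k : ℕ, ∀ e ∈ p.edges, c e = k

/-- `mcNum G` is the maximum number of colors (counted on the edges of `G`)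
used in an MC-coloring of `G`; it is `0` if `G` admits no MC-coloring
(in particular if `G` is disconnected). -/
noncomputable def mcNum {V : Type*} (G : SimpleGraph V) : ℕ :=
  sSup {k | ∃ c : Sym2 V → ℕ, IsMCColoring G c ∧ (Set.image c G.edgeSet).ncard = k}

open Classical in
/-- Neighbours of `u` inside a finite set `S`. -/
noncomputable def nbrIn {V : Type*} (G : SimpleGraph V) (S : Finset V) (u : V) : Finset V :=
  S.filter (fun v => G.Adj u v)

open Classical in
/-- Non-neighbours of `u` (other than `u`) inside a finite set `S`. -/
noncomputable def nonIn {V : Type*} (G : SimpleGraph V) (S : Finset V) (u : V) : Finset V :=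
  S.filter (fun v => v ≠ u ∧ ¬ G.Adj u v)

lemma nbr_non_card {V : Type*} (G : SimpleGraph V) (S : Finset V) (u : V) (hu : u ∈ S) :
    (nbrIn G S u).card + (nonIn G S u).card + 1 = S.card := by
  classical
  have h1 : S = insert u (nbrIn G S u ∪ nonIn G S u) := by
    ext v
    simp only [nbrIn, nonIn, Finset.mem_insert, Finset.mem_union, Finset.mem_filter]
    by_cases h : v = u
    · subst h; simp [hu]
    · by_cases h' : G.Adj u v <;> simp [h, h']
  have h2 : u ∉ nbrIn G S u ∪ nonIn G S u := by
    simp [nbrIn, nonIn]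
  have h3 : Disjoint (nbrIn G S u) (nonIn G S u) := by
    rw [Finset.disjoint_left]
    intro v hv hv'
    simp only [nbrIn, nonIn, Finset.mem_filter] at hv hv'
    exact hv'.2.2 hv.2
  conv_rhs => rw [h1]
  rw [Finset.card_insert_of_notMem h2, Finset.card_union_of_disjoint h3]

lemma nbrIn_card_induce {V : Type*} (G : SimpleGraph V) (S : Finset V)
    [DecidableRel (G.induce (S : Set V)).Adj] (u : (S : Set V)) :
    (nbrIn G S u).card = (G.induce (S : Set V)).degree u := by
  classical
  rw [← SimpleGraph.card_neighborFinset_eq_degree]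
  symm
  apply Finset.card_bij (fun (v : (S : Set V)) _ => (v : V))
  · intro v hv
    simp only [SimpleGraph.mem_neighborFinset, SimpleGraph.comap_adj] at hv
    simp only [nbrIn, Finset.mem_filter]
    exact ⟨by simpa using v.2, hv⟩
  · intro a _ b _ h
    exact Subtype.ext h
  · intro v hv
    simp only [nbrIn, Finset.mem_filter] at hv
    refine ⟨⟨v, by simpa using hv.1⟩, ?_, rfl⟩
    simpa [SimpleGraph.mem_neighborFinset] using hv.2

lemma conn_sum {V : Type*} (G : SimpleGraph V) (S : Finset V)
    (h : (G.induce (S : Set V)).Connected) :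
    2 * S.card ≤ (∑ u ∈ S, (nbrIn G S u).card) + 2 := by
  classical
  have h1 := h.card_vert_le_card_edgeSet_add_one
  have h2 := (G.induce (S : Set V)).sum_degrees_eq_twice_card_edges
  have h3 : ∑ u ∈ S, (nbrIn G S u).card = ∑ u : (S : Set V), (nbrIn G S u).card := by
    rw [← Finset.sum_coe_sort S]
    rfl
  rw [h3]
  simp_rw [nbrIn_card_induce]
  rw [h2]
  have h4 : Nat.card (S : Set V) = S.card := by simp
  rw [h4, Nat.card_eq_fintype_card, ← SimpleGraph.edgeFinset_card] at h1
  omega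

lemma conn_pos {V : Type*} (G : SimpleGraph V) (S : Finset V)
    (h : (G.induce (S : Set V)).Connected) (h2 : 2 ≤ S.card) (u : V) (hu : u ∈ S) :
    1 ≤ (nbrIn G S u).card := by
  classical
  have : Nontrivial (S : Set V) := by
    rw [Set.nontrivial_coe_sort]
    exact Finset.one_lt_card_iff_nontrivial.mp h2
  have := h.preconnected.degree_pos_of_nontrivial ⟨u, by simpa using hu⟩
  rw [← nbrIn_card_induce] at this
  exact this

lemma abstract_bound {V ι : Type*} [Fintype V] [DecidableEq V] [DecidableEq ι]
    (G : SimpleGraph V) [DecidableRel G.Adj]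
    (hn : 3 < Fintype.card V) (hΔ : 2 * G.maxDegree ≤ Fintype.card V + 1)
    (I : Finset ι) (S : ι → Finset V)
    (hc : ∀ i ∈ I, (G.induce (S i : Set V)).Connected)
    (h2 : ∀ i ∈ I, 2 ≤ (S i).card)
    (hcov : ∀ u v, u ≠ v → ¬ G.Adj u v → ∃ i ∈ I, u ∈ S i ∧ v ∈ S i) :
    Fintype.card V ≤ (∑ i ∈ I, ((S i).card - 2)) + 2 := by
  by_contra hcon
  push Not at hcon
  set n := Fintype.card V with hnn
  have hW : ∑ i ∈ I, ((S i).card - 2) + 3 ≤ n := by omega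
  have hN : ∀ u, n ≤ 2 * (nonIn G Finset.univ u).card + 3 := by
    intro u
    have h := nbr_non_card G Finset.univ u (Finset.mem_univ u)
    have h' : (nbrIn G Finset.univ u).card = G.degree u := by
      rw [← SimpleGraph.card_neighborFinset_eq_degree]
      congr 1
      ext v
      simp [nbrIn]
    have := G.degree_le_maxDegree u
    rw [Finset.card_univ] at h
    omega
  have hsub : ∀ u, (nonIn G Finset.univ u).card ≤
      ∑ i ∈ I.filter (fun i => u ∈ S i), (nonIn G (S i) u).card := by
    intro u
    refine le_trans (Finset.card_le_card ?_) Finset.card_biUnion_le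
    intro v hv
    simp only [nonIn, Finset.mem_filter, Finset.mem_univ, true_and] at hv
    obtain ⟨i, hi, hu, hv'⟩ := hcov u v (Ne.symm hv.1) hv.2
    simp only [Finset.mem_biUnion, Finset.mem_filter]
    exact ⟨i, ⟨hi, hu⟩, by simp [nonIn, hv', hv]⟩
  have hsum : ∀ i ∈ I, ∑ u ∈ S i, (nonIn G (S i) u).card ≤
      ((S i).card - 1) * ((S i).card - 2) := by
    intro i hi
    have h1 := conn_sum G (S i) (hc i hi)
    have h3 : ∑ u ∈ S i, ((nbrIn G (S i) u).card + (nonIn G (S i) u).card + 1)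
        = (S i).card * (S i).card := by
      rw [Finset.sum_congr rfl (fun u hu => nbr_non_card G (S i) u hu)]
      simp
    rw [Finset.sum_add_distrib, Finset.sum_add_distrib] at h3
    simp only [Finset.sum_const, smul_eq_mul, mul_one] at h3
    have := h2 i hi
    obtain ⟨t, ht⟩ := Nat.exists_eq_add_of_le this
    rw [ht] at h1 h3 ⊢
    have e1 : 2 + t - 1 = t + 1 := by omega
    have e2 : 2 + t - 2 = t := by omega
    rw [e1, e2]
    nlinarith
  have htot : n * (n - 3) ≤ 2 * ∑ i ∈ I, ((S i).card - 1) * ((S i).card - 2) := by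
    calc n * (n - 3) = ∑ u : V, (n - 3) := by simp [hnn]
      _ ≤ ∑ u : V, 2 * (nonIn G Finset.univ u).card :=
        Finset.sum_le_sum (fun u _ => by have := hN u; omega)
      _ = 2 * ∑ u : V, (nonIn G Finset.univ u).card := by rw [Finset.mul_sum]
      _ ≤ 2 * ∑ u : V, ∑ i ∈ I.filter (fun i => u ∈ S i), (nonIn G (S i) u).card :=
        Nat.mul_le_mul_left _ (Finset.sum_le_sum (fun u _ => hsub u))
      _ = 2 * ∑ i ∈ I, ∑ u ∈ S i, (nonIn G (S i) u).card := by
        congr 1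
        apply Finset.sum_comm'
        intro x y
        simp
        tauto
      _ ≤ _ := Nat.mul_le_mul_left _ (Finset.sum_le_sum hsum)
  have hbig : ∃ i ∈ I, n ≤ 2 * ((S i).card - 1) := by
    by_contra hno
    push Not at hno
    have : 2 * ∑ i ∈ I, ((S i).card - 1) * ((S i).card - 2) ≤ (n - 1) * (n - 3) := by
      rw [Finset.mul_sum]
      calc _ ≤ ∑ i ∈ I, (n - 1) * ((S i).card - 2) := by
            apply Finset.sum_le_sum
            intro i hi
            rw [← mul_assoc]
            have := hno i hi
            exact Nat.mul_le_mul_right _ (by omega)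
        _ = (n - 1) * ∑ i ∈ I, ((S i).card - 2) := by rw [Finset.mul_sum]
        _ ≤ _ := Nat.mul_le_mul_left _ (by omega)
    have h5 : (n - 1) * (n - 3) < n * (n - 3) :=
      Nat.mul_lt_mul_of_pos_right (by omega) (by omega)
    omega
  obtain ⟨i, hi, hbi⟩ := hbig
  have hsplit := Finset.add_sum_erase I (fun i => (S i).card - 2) hi
  have : ∃ u, u ∉ S i := by
    by_contra hall
    push Not at hall
    have : S i = Finset.univ := Finset.eq_univ_iff_forall.mpr hall
    have : (S i).card = n := by rw [this, Finset.card_univ]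
    omega
  obtain ⟨u, hu⟩ := this
  have h6 : (nonIn G Finset.univ u).card ≤ ∑ j ∈ I.erase i, ((S j).card - 2) := by
    refine (hsub u).trans ?_
    refine le_trans (Finset.sum_le_sum (g := fun j => (S j).card - 2) ?_)
      (Finset.sum_le_sum_of_subset ?_)
    · intro j hj
      rw [Finset.mem_filter] at hj
      have := nbr_non_card G (S j) u hj.2
      have := conn_pos G (S j) (hc j hj.1) (h2 j hj.1) u hj.2
      omega
    · intro j hj
      rw [Finset.mem_filter] at hj
      rw [Finset.mem_erase]
      exact ⟨fun h => hu (h ▸ hj.2), hj.1⟩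
  have := hN u
  omega

/-- The subgraph of edges with color `k`. -/
def colorGraph {V : Type*} (G : SimpleGraph V) (c : Sym2 V → ℕ) (k : ℕ) : SimpleGraph V where
  Adj u v := G.Adj u v ∧ c s(u, v) = k
  symm := ⟨fun u v h => ⟨h.1.symm, by rw [Sym2.eq_swap]; exact h.2⟩⟩
  loopless := ⟨fun u h => G.loopless.irrefl u h.1⟩

/-- The refined coloring: color together with the component of the color class. -/
noncomputable def refCol {V : Type*} (G : SimpleGraph V) (c : Sym2 V → ℕ) (e : Sym2 V) :
    Σ k, (colorGraph G c k).ConnectedComponent :=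
  ⟨c e, (colorGraph G c (c e)).connectedComponentMk e.out.1⟩

lemma refCol_eq {V : Type*} (G : SimpleGraph V) (c : Sym2 V → ℕ) (k : ℕ) (a b : V)
    (h : (colorGraph G c k).Adj a b) :
    refCol G c s(a, b) = ⟨k, (colorGraph G c k).connectedComponentMk a⟩ := by
  obtain ⟨h1, h2⟩ := h
  subst h2
  unfold refCol
  congr 1
  rw [SimpleGraph.ConnectedComponent.eq]
  have hm : (s(a, b) : Sym2 V).out.1 ∈ s(a, b) := Sym2.out_fst_mem _
  rw [Sym2.mem_iff] at hm
  rcases hm with hm | hm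
  · rw [hm]
  · rw [hm]
    exact (SimpleGraph.Adj.reachable (show (colorGraph G c (c s(a, b))).Adj a b from ⟨h1, rfl⟩)).symm

lemma reach_of_walk {V : Type*} (G : SimpleGraph V) (c : Sym2 V → ℕ) (k : ℕ) {u v : V}
    (p : G.Walk u v) (h : ∀ e ∈ p.edges, c e = k) : (colorGraph G c k).Reachable u v := by
  induction p with
  | nil => exact SimpleGraph.Reachable.refl _
  | cons hadj p ih =>
    simp only [SimpleGraph.Walk.edges_cons, List.mem_cons, forall_eq_or_imp] at h
    exact (SimpleGraph.Adj.reachable (show (colorGraph G c k).Adj _ _ from ⟨hadj, h.1⟩)).trans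
      (ih h.2)

lemma mc_upper {V : Type*} [Fintype V] [DecidableEq V]
    (G : SimpleGraph V) [DecidableRel G.Adj]
    (hn : 3 < Fintype.card V) (hΔ : 2 * G.maxDegree ≤ Fintype.card V + 1)
    (c : Sym2 V → ℕ) (hc : IsMCColoring G c) :
    (Set.image c G.edgeSet).ncard + Fintype.card V ≤ G.edgeFinset.card + 2 := by
  classical
  set I := G.edgeFinset.image (refCol G c) with hI
  let S : (Σ k, (colorGraph G c k).ConnectedComponent) → Finset V := fun i => i.2.supp.toFinset
  let F : (Σ k, (colorGraph G c k).ConnectedComponent) → Finset (Sym2 V) :=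
    fun i => G.edgeFinset.filter (fun e => refCol G c e = i)
  have hle : ∀ k, colorGraph G c k ≤ G := fun k a b h => h.1
  have hconn : ∀ i, ((colorGraph G c i.1).induce (S i : Set V)).Connected := by
    intro i
    have := i.2.connected_toSimpleGraph
    have e : (S i : Set V) = i.2.supp := by simp [S]
    rw [e]
    exact this
  have hmemI : ∀ k a b, (colorGraph G c k).Adj a b →
      (⟨k, (colorGraph G c k).connectedComponentMk a⟩ :
        Σ k, (colorGraph G c k).ConnectedComponent) ∈ I := by
    intro k a b h
    rw [hI, Finset.mem_image]
    exact ⟨s(a, b), by simpa using h.1, refCol_eq G c k a b h⟩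
  have hSF : ∀ i, (S i).card ≤ (F i).card + 1 := by
    intro i
    have h1 := (hconn i).card_vert_le_card_edgeSet_add_one
    have h4 : Nat.card (S i : Set V) = (S i).card := by simp
    rw [h4, Nat.card_eq_fintype_card, ← SimpleGraph.edgeFinset_card] at h1
    refine h1.trans (Nat.add_le_add_right ?_ 1)
    apply Finset.card_le_card_of_injOn (Sym2.map Subtype.val)
    · intro e he
      induction e using Sym2.ind with
      | _ a b =>
        simp only [Finset.mem_coe, SimpleGraph.mem_edgeFinset, SimpleGraph.mem_edgeSet,
          SimpleGraph.comap_adj] at he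
        have he' : (colorGraph G c i.1).Adj a b := he
        simp only [F, Sym2.map_mk, Finset.coe_filter, Set.mem_ofPred_eq,
          SimpleGraph.mem_edgeFinset, SimpleGraph.mem_edgeSet]
        refine ⟨he'.1, ?_⟩
        rw [refCol_eq G c i.1 a b he']
        have ha : (a : V) ∈ i.2.supp := by
          have := a.2
          simpa [S] using this
        rw [SimpleGraph.ConnectedComponent.mem_supp_iff] at ha
        rw [ha]
    · exact (Sym2.map.injective Subtype.val_injective).injOn
  have hFsum : ∑ i ∈ I, (F i).card = G.edgeFinset.card :=
    (Finset.card_eq_sum_card_image (refCol G c) G.edgeFinset).symm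
  have hImg : (Set.image c G.edgeSet).ncard ≤ I.card := by
    have : Set.image c G.edgeSet = ((I.image Sigma.fst : Finset ℕ) : Set ℕ) := by
      rw [hI, Finset.image_image]
      simp only [Finset.coe_image, SimpleGraph.coe_edgeFinset]
      rfl
    rw [this, Set.ncard_coe_finset]
    exact Finset.card_image_le
  have h2 : ∀ i ∈ I, 2 ≤ (S i).card := by
    intro i hi
    rw [hI, Finset.mem_image] at hi
    obtain ⟨e, he, rfl⟩ := hi
    induction e using Sym2.ind with
    | _ a b =>
      have hab : G.Adj a b := by simpa using he
      have hadj : (colorGraph G c (c s(a, b))).Adj a b := ⟨hab, rfl⟩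
      rw [refCol_eq G c _ a b hadj]
      have : ({a, b} : Finset V) ⊆ ((colorGraph G c (c s(a, b))).connectedComponentMk a).supp.toFinset := by
        intro x hx
        simp only [Finset.mem_insert, Finset.mem_singleton] at hx
        rw [Set.mem_toFinset, SimpleGraph.ConnectedComponent.mem_supp_iff,
          SimpleGraph.ConnectedComponent.eq]
        rcases hx with rfl | rfl
        · exact SimpleGraph.Reachable.refl _
        · exact hadj.reachable.symm
      have := Finset.card_le_card this
      rwa [Finset.card_pair hab.ne] at this
  have hcov : ∀ u v, u ≠ v → ¬ G.Adj u v → ∃ i ∈ I, u ∈ S i ∧ v ∈ S i := by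
    intro u v huv _
    obtain ⟨p, _, k, hk⟩ := hc u v
    have hr := reach_of_walk G c k p hk
    refine ⟨⟨k, (colorGraph G c k).connectedComponentMk u⟩, ?_, ?_, ?_⟩
    · cases p with
      | nil => exact absurd rfl huv
      | cons h q =>
        exact hmemI k u _ ⟨h, hk _ (by simp)⟩
    · simp [S]
    · simp only [S, Set.mem_toFinset, SimpleGraph.ConnectedComponent.mem_supp_iff,
        SimpleGraph.ConnectedComponent.eq]
      exact hr.symm
  have key := abstract_bound G hn hΔ I S
    (fun i _ => (hconn i).mono (fun a b h => hle _ h)) h2 hcov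
  have h7 : ∑ i ∈ I, ((S i).card - 2) + I.card ≤ G.edgeFinset.card := by
    rw [← hFsum, Finset.card_eq_sum_ones, ← Finset.sum_add_distrib]
    apply Finset.sum_le_sum
    intro i hi
    have := hSF i
    have := h2 i hi
    omega
  omega

lemma mc_lower {V : Type*} [Fintype V] [DecidableEq V]
    (G : SimpleGraph V) [DecidableRel G.Adj] (hG : G.Connected)
    (hn : 3 < Fintype.card V) :
    ∃ c : Sym2 V → ℕ, IsMCColoring G c ∧
      (Set.image c G.edgeSet).ncard + Fintype.card V = G.edgeFinset.card + 2 := by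
  classical
  obtain ⟨T, hle, hT⟩ := hG.exists_isTree_le
  let f := Fintype.equivFin (Sym2 V)
  let c : Sym2 V → ℕ := fun e => if e ∈ T.edgeFinset then 0 else (f e : ℕ) + 1
  refine ⟨c, ?_, ?_⟩
  · intro u v
    obtain ⟨p, hp⟩ := (hT.connected.preconnected u v).exists_isPath
    refine ⟨p.mapLe hle, hp.mapLe hle, 0, ?_⟩
    intro e he
    rw [SimpleGraph.Walk.edges_mapLe_eq_edges] at he
    have := p.edges_subset_edgeSet he
    simp [c, this]
  · have hcard := hT.card_edgeFinset
    have hsub : T.edgeFinset ⊆ G.edgeFinset := by simpa using hle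
    have himg : Set.image c G.edgeSet =
        ((insert 0 ((G.edgeFinset \ T.edgeFinset).image (fun e => (f e : ℕ) + 1)) : Finset ℕ)
          : Set ℕ) := by
      ext k
      simp only [Set.mem_image, Finset.coe_insert, Finset.coe_image, Set.mem_insert_iff,
        Finset.mem_coe, Finset.mem_sdiff]
      constructor
      · rintro ⟨e, he, rfl⟩
        by_cases h : e ∈ T.edgeFinset
        · left; simp only [c, if_pos h]
        · right
          exact ⟨e, ⟨by simpa using he, h⟩, by simp only [c, if_neg h]⟩
      · rintro (rfl | ⟨e, ⟨he, h⟩, rfl⟩)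
        · have : 0 < T.edgeFinset.card := by omega
          obtain ⟨e, he⟩ := Finset.card_pos.mp this
          exact ⟨e, by simpa using hsub he, by simp only [c, if_pos he]⟩
        · exact ⟨e, by simpa using he, by simp only [c, if_neg h]⟩
    rw [himg, Set.ncard_coe_finset, Finset.card_insert_of_notMem (by simp),
      Finset.card_image_of_injective, Finset.card_sdiff_of_subset hsub]
    · have := Finset.card_le_card hsub
      omega
    · intro a b h
      simp only [Nat.add_right_cancel_iff] at h
      exact f.injective (Fin.ext h)

/-- If `G` is a connected graph with `n > 3` vertices and maximum degree
`Δ(G) ≤ (n+1)/2`, then `mc(G) = m - n + 2`. -/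
theorem mc_eq_of_maxDegree_le_half {V : Type*} [Fintype V] [DecidableEq V]
    (G : SimpleGraph V) [DecidableRel G.Adj] (hG : G.Connected)
    (hn : 3 < Fintype.card V)
    (hΔ : (G.maxDegree : ℝ) ≤ ((Fintype.card V : ℝ) + 1) / 2) :
    (mcNum G : ℤ) = (G.edgeFinset.card : ℤ) - (Fintype.card V : ℤ) + 2 := by
  have hΔ' : 2 * G.maxDegree ≤ Fintype.card V + 1 := by
    have : (2 * G.maxDegree : ℝ) ≤ (Fintype.card V : ℝ) + 1 := by linarith
    exact_mod_cast this
  obtain ⟨c, hc, hcard⟩ := mc_lower G hG hn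
  have hgr : IsGreatest {k | ∃ c : Sym2 V → ℕ, IsMCColoring G c ∧
      (Set.image c G.edgeSet).ncard = k} (Set.image c G.edgeSet).ncard := by
    refine ⟨⟨c, hc, rfl⟩, ?_⟩
    rintro k ⟨c', hc', rfl⟩
    have := mc_upper G hn hΔ' c' hc'
    omega
  have h : mcNum G = (Set.image c G.edgeSet).ncard := hgr.csSup_eq
  omega
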